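/- Let R be a commutative ring, n ≥ 2, and N ≥ 1. Suppose that every element of E(2,R) can be written as a product v₁·v₂·⋯·v_N of N matrices lying alternately in U⁺(2,R) and U⁻(2,R) (starting with U⁺(2,R)). Then every element of E(n,R) can be written as a product u₁·u₂·⋯·u_N of N matrices lying alternately in U⁺(n,R) and U⁻(n,R) (starting with U⁺(n,R)). -/

import Mathlib

/-!
STATEMENT 3. Let `R` be a commutative ring, `n ≥ 2`, and `N ≥ 1`. Suppose that every
element of `E(2,R)` can be written as a product of `N` matrices lying alternately in
`U⁺(2,R)` and `U⁻(2,R)` (starting with `U⁺(2,R)`). Then every element of `E(n,R)` can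
be written as a product of `N` matrices lying alternately in `U⁺(n,R)` and `U⁻(n,R)`
(starting with `U⁺(n,R)`).
-/

/-- The set of elementary transvections `e_{ij}(r) = 1 + r·E_{ij}`, `i ≠ j`, in `SL(n,R)`. -/
def ElemTransvections (n : ℕ) (R : Type) [CommRing R] :
    Set (Matrix.SpecialLinearGroup (Fin n) R) :=
  {g | ∃ (i j : Fin n) (r : R), i ≠ j ∧
    (g : Matrix (Fin n) (Fin n) R) = Matrix.transvection i j r}

/-- The elementary subgroup `E(n,R) ≤ SL(n,R)` generated by all elementary transvections. -/
def ElementarySubgroup (n : ℕ) (R : Type) [CommRing R] :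
    Subgroup (Matrix.SpecialLinearGroup (Fin n) R) :=
  Subgroup.closure (ElemTransvections n R)

/-- The set `U⁺(n,R)` of upper triangular matrices in `SL(n,R)` with all diagonal
entries equal to `1`. -/
def UnitriangularUpper (n : ℕ) (R : Type) [CommRing R] :
    Set (Matrix.SpecialLinearGroup (Fin n) R) :=
  {g | (∀ i : Fin n, (g : Matrix (Fin n) (Fin n) R) i i = 1) ∧
       ∀ i j : Fin n, j < i → (g : Matrix (Fin n) (Fin n) R) i j = 0}

/-- The set `U⁻(n,R)` of lower triangular matrices in `SL(n,R)` with all diagonal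
entries equal to `1`. -/
def UnitriangularLower (n : ℕ) (R : Type) [CommRing R] :
    Set (Matrix.SpecialLinearGroup (Fin n) R) :=
  {g | (∀ i : Fin n, (g : Matrix (Fin n) (Fin n) R) i i = 1) ∧
       ∀ i j : Fin n, i < j → (g : Matrix (Fin n) (Fin n) R) i j = 0}

/-- `g = u₁ ⋯ u_N` where the `uₖ` lie alternately in `U⁺(n,R)` and `U⁻(n,R)`,
starting with `U⁺(n,R)`. -/
def IsAlternatingUnitriangularProd (n : ℕ) (R : Type) [CommRing R] (N : ℕ)
    (g : Matrix.SpecialLinearGroup (Fin n) R) : Prop :=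
  ∃ u : Fin N → Matrix.SpecialLinearGroup (Fin n) R,
    (∀ i : Fin N, (i.val % 2 = 0 → u i ∈ UnitriangularUpper n R) ∧
                  (i.val % 2 = 1 → u i ∈ UnitriangularLower n R)) ∧
    g = (List.ofFn u).prod

/-!
The idea is Tavgen's rank reduction. Consider the copy `L` of `SL(2,R)` acting on the coordinates
`i` and `i + 1`, and the unipotent radicals `V⁺`, `V⁻` of the two opposite standard parabolic
subgroups in whose Levi factor `L` lies. Then `U±(n,R) = U±(L) V±`, and `L` normalizes `V⁺` and
`V⁻`, so that the factors from `L` can be moved to the left: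
`U⁺(n,R) U⁻(n,R) ⋯ = (U⁺(L) U⁻(L) ⋯) (V⁺ V⁻ ⋯) = E(L) (V⁺ V⁻ ⋯)`,
the last step being the hypothesis on `E(2,R)`. Hence the set on the left is stable under left
multiplication by `E(L)`. As `i` varies, the subgroups `E(L)` generate `E(n,R)`, and the set
contains `1`, so it contains `E(n,R)`.
-/

open Matrix Pointwise OrderDual commutatorElement MatrixGroups

section PointwiseProducts

variable {G : Type*} [Group G] {N : ℕ}

lemma prod_ofFn_subset (H : Subgroup G) {A : Fin N → Set G} (hA : ∀ k, A k ⊆ H) :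
    (List.ofFn A).prod ⊆ H := by
  intro g hg
  obtain ⟨f, rfl⟩ := Set.mem_prod_list_ofFn.1 hg
  exact list_prod_mem (List.forall_mem_ofFn_iff.2 fun k => hA k (f k).2)

lemma prod_ofFn_mul_of_le_normalizer (L : Subgroup G) {A : Fin N → Set G} {V : Fin N → Subgroup G}
    (hA : ∀ k, A k ⊆ L) (hV : ∀ k, L ≤ Subgroup.normalizer (V k : Set G)) :
    (List.ofFn fun k => A k * (V k : Set G)).prod =
      (List.ofFn A).prod * (List.ofFn fun k => (V k : Set G)).prod := by
  induction N with
  | zero => simp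
  | succ N ih =>
    have hcomm : (V 0 : Set G) * (List.ofFn fun k : Fin N => A k.succ).prod =
        (List.ofFn fun k : Fin N => A k.succ).prod * (V 0 : Set G) :=
      (Subgroup.set_mul_normalizer_comm _ _
        ((prod_ofFn_subset L fun k => hA k.succ).trans (hV 0))).symm
    simp only [List.ofFn_succ, List.prod_cons, ih (fun k => hA k.succ) fun k => hV k.succ]
    rw [mul_assoc, ← mul_assoc (V 0 : Set G), hcomm]
    simp only [mul_assoc]

end PointwiseProducts

section StrictBlockTriangular

variable {ι R α : Type*} [Ring R] [LinearOrder α] {w : ι → α} {M N : Matrix ι ι R}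

/-- Strict block upper triangularity with respect to `w : ι → α`: the blocks are the level sets of
`w`, and the diagonal blocks vanish too, as opposed to `Matrix.BlockTriangular`. -/
def StrictBlockTriangular (M : Matrix ι ι R) (w : ι → α) : Prop :=
  ∀ ⦃a b⦄, w b ≤ w a → M a b = 0

namespace StrictBlockTriangular

lemma blockTriangular (hM : StrictBlockTriangular M w) : M.BlockTriangular w :=
  fun _ _ hab => hM hab.le

lemma add (hM : StrictBlockTriangular M w) (hN : StrictBlockTriangular N w) :
    StrictBlockTriangular (M + N) w :=
  fun a b hab => by rw [Matrix.add_apply, hM hab, hN hab, add_zero]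

lemma neg (hM : StrictBlockTriangular M w) : StrictBlockTriangular (-M) w :=
  fun a b hab => by rw [Matrix.neg_apply, hM hab, neg_zero]

lemma mul_blockTriangular [Fintype ι] (hM : StrictBlockTriangular M w)
    (hN : N.BlockTriangular w) : StrictBlockTriangular (M * N) w := by
  refine fun a b hab => (Matrix.mul_apply ..).trans (Finset.sum_eq_zero fun c _ => ?_)
  rcases le_or_gt (w c) (w a) with hca | hac
  · rw [hM hca, zero_mul]
  · rw [hN (hab.trans_lt hac), mul_zero]

lemma blockTriangular_mul [Fintype ι] (hM : M.BlockTriangular w)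
    (hN : StrictBlockTriangular N w) : StrictBlockTriangular (M * N) w := by
  refine fun a b hab => (Matrix.mul_apply ..).trans (Finset.sum_eq_zero fun c _ => ?_)
  rcases lt_or_ge (w c) (w a) with hca | hac
  · rw [hM hca, zero_mul]
  · rw [hN (hab.trans hac), mul_zero]

lemma blockTriangular_of_sub_one [DecidableEq ι] (hM : StrictBlockTriangular (M - 1) w) :
    M.BlockTriangular w := by
  simpa using hM.blockTriangular.add blockTriangular_one

end StrictBlockTriangular

end StrictBlockTriangular

section Commutator

variable {ι R : Type*} [Fintype ι] [DecidableEq ι] [CommRing R]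

lemma transvection_commutator {i j k : ι} (hij : i ≠ j) (hjk : j ≠ k) (hik : i ≠ k) (r t : R) :
    ⁅Matrix.SpecialLinearGroup.transvection hij r, Matrix.SpecialLinearGroup.transvection hjk t⁆ =
      Matrix.SpecialLinearGroup.transvection hik (r * t) := by
  rw [commutatorElement_def, Matrix.SpecialLinearGroup.transvection_inv,
    Matrix.SpecialLinearGroup.transvection_inv]
  apply Subtype.ext
  simp only [Matrix.SpecialLinearGroup.coe_mul, Matrix.SpecialLinearGroup.transvection_coe,
    mul_add, add_mul, mul_one, one_mul, single_mul_single_same, single_mul_single_of_ne, ne_eq,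
    hij.symm, hjk.symm, hik.symm, not_false_eq_true, add_zero, mul_neg, neg_mul, neg_neg]
  simp only [← single_neg]
  abel

end Commutator

section UnipotentRadical

variable {ι R α β : Type*} [Fintype ι] [DecidableEq ι] [CommRing R] [LinearOrder α] [LinearOrder β]

lemma blockTriangular_coe_inv {g : Matrix.SpecialLinearGroup ι R} {w : ι → α}
    (hg : (g : Matrix ι ι R).BlockTriangular w) :
    ((g⁻¹ : Matrix.SpecialLinearGroup ι R) : Matrix ι ι R).BlockTriangular w := by
  have : Invertible (g : Matrix ι ι R) := invertibleOfIsUnitDet _ (by simp)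
  have hinv : ((g⁻¹ : Matrix.SpecialLinearGroup ι R) : Matrix ι ι R) = (g : Matrix ι ι R)⁻¹ := by
    simp [Matrix.inv_def]
  exact hinv ▸ blockTriangular_inv_of_blockTriangular hg

/-- The unipotent radical of the parabolic subgroup of block upper triangular matrices in
`SL(ι,R)`, the blocks being the level sets of `w : ι → α`. An injective `w` gives the upper
unitriangular matrices for the ordering of `ι` by `w`. -/
def unipotentRadical (R : Type*) [CommRing R] (w : ι → α) :
    Subgroup (Matrix.SpecialLinearGroup ι R) where
  carrier := {g | StrictBlockTriangular ((g : Matrix ι ι R) - 1) w}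
  one_mem' a b _ := by simp
  mul_mem' {g h} hg hh := by
    have hgh : ((g * h : Matrix.SpecialLinearGroup ι R) : Matrix ι ι R) - 1 =
        ((g : Matrix ι ι R) - 1) * h + ((h : Matrix ι ι R) - 1) := by
      rw [Matrix.SpecialLinearGroup.coe_mul]
      noncomm_ring
    change StrictBlockTriangular _ w
    rw [hgh]
    exact (hg.mul_blockTriangular hh.blockTriangular_of_sub_one).add hh
  inv_mem' {g} hg := by
    have hinv : ((g⁻¹ : Matrix.SpecialLinearGroup ι R) : Matrix ι ι R) - 1 =
        -(((g : Matrix ι ι R) - 1) * (g⁻¹ : Matrix.SpecialLinearGroup ι R)) := by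
      rw [sub_mul, one_mul, ← Matrix.SpecialLinearGroup.coe_mul, mul_inv_cancel,
        Matrix.SpecialLinearGroup.coe_one, neg_sub]
    change StrictBlockTriangular _ w
    rw [hinv]
    exact (hg.mul_blockTriangular (blockTriangular_coe_inv hg.blockTriangular_of_sub_one)).neg

variable {w : ι → α} {g : Matrix.SpecialLinearGroup ι R}

lemma mem_unipotentRadical_iff :
    g ∈ unipotentRadical R w ↔ StrictBlockTriangular ((g : Matrix ι ι R) - 1) w :=
  Iff.rfl

lemma mem_unipotentRadical_iff_apply :
    g ∈ unipotentRadical R w ↔ ∀ a b, w b ≤ w a → g a b = (1 : Matrix ι ι R) a b :=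
  forall₃_congr fun _ _ _ => sub_eq_zero

lemma mem_unipotentRadical_iff_of_injective (hw : w.Injective) :
    g ∈ unipotentRadical R w ↔ (∀ a, g a a = 1) ∧ ∀ a b, w b < w a → g a b = 0 := by
  rw [mem_unipotentRadical_iff_apply]
  constructor
  · intro hg
    refine ⟨fun a => by simpa using hg a a le_rfl, fun a b hab => ?_⟩
    rw [hg a b hab.le, one_apply_ne (ne_of_apply_ne w hab.ne')]
  · rintro ⟨hdiag, hbelow⟩ a b hab
    rcases hab.eq_or_lt with heq | hlt
    · rw [hw heq, hdiag, one_apply_eq]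
    · rw [hbelow a b hlt, one_apply_ne (ne_of_apply_ne w hlt.ne')]

lemma conj_mem_unipotentRadical (hg : (g : Matrix ι ι R).BlockTriangular w)
    {u : Matrix.SpecialLinearGroup ι R} (hu : u ∈ unipotentRadical R w) :
    g * u * g⁻¹ ∈ unipotentRadical R w := by
  have hconj : ((g * u * g⁻¹ : Matrix.SpecialLinearGroup ι R) : Matrix ι ι R) - 1 =
      g * ((u : Matrix ι ι R) - 1) * (g⁻¹ : Matrix.SpecialLinearGroup ι R) := by
    rw [mul_sub, mul_one, sub_mul]
    simp only [← Matrix.SpecialLinearGroup.coe_mul, mul_inv_cancel,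
      Matrix.SpecialLinearGroup.coe_one]
  rw [mem_unipotentRadical_iff, hconj]
  exact (StrictBlockTriangular.blockTriangular_mul hg hu).mul_blockTriangular
    (blockTriangular_coe_inv hg)

lemma mem_normalizer_unipotentRadical (hg : (g : Matrix ι ι R).BlockTriangular w) :
    g ∈ Subgroup.normalizer (unipotentRadical R w : Set (Matrix.SpecialLinearGroup ι R)) := by
  refine Subgroup.mem_normalizer_iff.2 fun u => ⟨conj_mem_unipotentRadical hg, fun hu => ?_⟩
  simpa [mul_assoc] using conj_mem_unipotentRadical (blockTriangular_coe_inv hg) hu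

lemma transvection_mem_unipotentRadical {i j : ι} (hij : i ≠ j) (hw : w i < w j) (r : R) :
    Matrix.SpecialLinearGroup.transvection hij r ∈ unipotentRadical R w := by
  rw [mem_unipotentRadical_iff, Matrix.SpecialLinearGroup.transvection_coe, add_sub_cancel_left]
  refine fun a b hab => single_apply_of_ne _ _ _ _ _ ?_
  rintro ⟨rfl, rfl⟩
  exact hab.not_gt hw

/-- The hypothesis `hlt` says that coarsening `w` to `w'` loses exactly the root `(i, j)`. -/
lemma unipotentRadical_eq_range_transvection_mul {w' : ι → β} {i j : ι} (hij : i ≠ j)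
    (hlt : ∀ a b, w a < w b ↔ w' a < w' b ∨ a = i ∧ b = j) :
    (unipotentRadical R w : Set (Matrix.SpecialLinearGroup ι R)) =
      Set.range (Matrix.SpecialLinearGroup.transvection hij) *
        (unipotentRadical R w' : Set (Matrix.SpecialLinearGroup ι R)) := by
  have htrans (r : R) := transvection_mem_unipotentRadical hij ((hlt i j).2 (.inr ⟨rfl, rfl⟩)) r
  refine Set.Subset.antisymm (fun u hu => ?_) ?_
  · refine ⟨_, ⟨u i j, rfl⟩, (Matrix.SpecialLinearGroup.transvection hij (u i j))⁻¹ * u,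
      mem_unipotentRadical_iff_apply.2 fun a b hab => ?_, mul_inv_cancel_left _ _⟩
    by_cases h : a = i ∧ b = j
    · obtain ⟨rfl, rfl⟩ := h
      have hdiag : u b b = 1 := by simpa using mem_unipotentRadical_iff_apply.1 hu b b le_rfl
      rw [Matrix.SpecialLinearGroup.transvection_inv]
      change (Matrix.transvection a b (-u a b) * (u : Matrix ι ι R)) a b = _
      rw [Matrix.transvection_mul_apply_same, one_apply_ne hij, hdiag]
      ring
    · exact mem_unipotentRadical_iff_apply.1 (mul_mem (inv_mem (htrans (u i j))) hu) a b
        (not_lt.1 fun hab' => ((hlt a b).1 hab').elim hab.not_gt h)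
  · rintro _ ⟨_, ⟨r, rfl⟩, v, hv, rfl⟩
    refine mul_mem (htrans r) (mem_unipotentRadical_iff_apply.2 fun a b hab => ?_)
    exact mem_unipotentRadical_iff_apply.1 hv a b
      (not_lt.1 fun h => hab.not_gt ((hlt a b).2 (.inl h)))

lemma unipotentRadical_eq_range_transvection {i j : ι} (hij : i ≠ j)
    (hlt : ∀ a b, w a < w b ↔ a = i ∧ b = j) :
    (unipotentRadical R w : Set (Matrix.SpecialLinearGroup ι R)) =
      Set.range (Matrix.SpecialLinearGroup.transvection hij) := by
  have hbot : unipotentRadical R (fun _ : ι => ()) = ⊥ := by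
    refine (Subgroup.eq_bot_iff_forall _).2 fun g hg => ?_
    ext a b
    exact mem_unipotentRadical_iff_apply.1 hg a b le_rfl
  simpa [hbot] using unipotentRadical_eq_range_transvection_mul (R := R)
    (w' := fun _ : ι => ()) hij (by simpa using hlt)

end UnipotentRadical

section BlockEmbedding

variable {κ ι R : Type*} [DecidableEq κ] [Fintype ι] [DecidableEq ι] [CommRing R]

lemma one_submatrix_mul_one_submatrix (s : κ ↪ ι) :
    (1 : Matrix ι ι R).submatrix s id * (1 : Matrix ι ι R).submatrix id s = 1 := by
  rw [← submatrix_mul _ _ _ _ _ Function.bijective_id, mul_one, submatrix_one_embedding]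

variable [Fintype κ]

/-- The embedding of `SL(κ,R)` into `SL(ι,R)` acting on the coordinates in the range of `s` and
fixing the others. It is written as `A ↦ 1 + P (A - 1) Pᵀ`, where the columns of `P` are the basis
vectors indexed by `s`, so that `Pᵀ P = 1`. -/
def blockEmbedding (R : Type*) [CommRing R] (s : κ ↪ ι) :
    Matrix.SpecialLinearGroup κ R →* Matrix.SpecialLinearGroup ι R where
  toFun A := ⟨1 + (1 : Matrix ι ι R).submatrix id s *
      (((A : Matrix κ κ R) - 1) * (1 : Matrix ι ι R).submatrix s id), by
    rw [det_one_add_mul_comm, Matrix.mul_assoc, one_submatrix_mul_one_submatrix, mul_one,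
      add_sub_cancel, A.2]⟩
  map_one' := Subtype.ext (by simp)
  map_mul' A B := by
    apply Subtype.ext
    set P := (1 : Matrix ι ι R).submatrix id s
    set Q := (1 : Matrix ι ι R).submatrix s id
    have hQP (M : Matrix κ ι R) : Q * (P * M) = M := by
      rw [← Matrix.mul_assoc, one_submatrix_mul_one_submatrix, Matrix.one_mul]
    have hAB : (A : Matrix κ κ R) * B - 1 =
        ((A : Matrix κ κ R) - 1) + (B - 1) + ((A : Matrix κ κ R) - 1) * (B - 1) := by
      noncomm_ring
    change 1 + P * ((A.1 * B.1 - 1) * Q) = (1 + P * ((A.1 - 1) * Q)) * (1 + P * ((B.1 - 1) * Q))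
    simp only [hAB, Matrix.add_mul, Matrix.mul_add, Matrix.mul_assoc, hQP, Matrix.one_mul,
      Matrix.mul_one]
    abel

lemma blockEmbedding_transvection (s : κ ↪ ι) {p q : κ} (hpq : p ≠ q) (r : R) :
    blockEmbedding R s (Matrix.SpecialLinearGroup.transvection hpq r) =
      Matrix.SpecialLinearGroup.transvection (s.injective.ne hpq) r := by
  apply Subtype.ext
  change 1 + _ * ((1 + single p q r - 1) * _) = 1 + single (s p) (s q) r
  rw [add_sub_cancel_left]
  congr 1
  ext a b
  simp only [Matrix.mul_apply, single_apply, submatrix_apply, one_apply, id_eq]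
  rw [Finset.sum_eq_single p, Finset.sum_eq_single q]
  · by_cases ha : a = s p <;> simp [ha, eq_comm]
  all_goals simp +contextual [eq_comm]

lemma image_blockEmbedding_range_transvection (s : κ ↪ ι) {p q : κ} (hpq : p ≠ q) :
    blockEmbedding R s '' Set.range (Matrix.SpecialLinearGroup.transvection hpq) =
      Set.range (Matrix.SpecialLinearGroup.transvection (F := R) (s.injective.ne hpq)) := by
  rw [← Set.range_comp]
  exact congrArg Set.range (funext (blockEmbedding_transvection s hpq))

lemma unipotentRadical_eq_image_blockEmbedding_mul {α β γ : Type*} [LinearOrder α] [LinearOrder β]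
    [LinearOrder γ] {w₀ : κ → γ} {w : ι → α} {w' : ι → β} (s : κ ↪ ι) {p q : κ} (hpq : p ≠ q)
    (hw₀ : ∀ a b, w₀ a < w₀ b ↔ a = p ∧ b = q)
    (hw : ∀ a b, w a < w b ↔ w' a < w' b ∨ a = s p ∧ b = s q) :
    (unipotentRadical R w : Set (Matrix.SpecialLinearGroup ι R)) =
      blockEmbedding R s '' (unipotentRadical R w₀ : Set (Matrix.SpecialLinearGroup κ R)) *
        (unipotentRadical R w' : Set (Matrix.SpecialLinearGroup ι R)) := by
  rw [unipotentRadical_eq_range_transvection hpq hw₀, image_blockEmbedding_range_transvection,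
    unipotentRadical_eq_range_transvection_mul (s.injective.ne hpq) hw]

end BlockEmbedding

section AlternatingProducts

variable {ι R α : Type*} [Fintype ι] [DecidableEq ι] [CommRing R] [LinearOrder α]

/-- The `k`-th factor of an alternating product, counted from `0`: the unipotent radical of the
parabolic subgroup attached to `w` for even `k`, and of the opposite parabolic for odd `k`. -/
def alternatingUnipotent (R : Type*) [CommRing R] (w : ι → α) (k : ℕ) :
    Subgroup (Matrix.SpecialLinearGroup ι R) :=
  if Even k then unipotentRadical R w else unipotentRadical R (toDual ∘ w)

/-- The pointwise product `U⁺ U⁻ U⁺ ⋯` of `N` alternating factors, starting with the unipotent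
radical attached to `w`. -/
def alternatingProducts (R : Type*) [CommRing R] (w : ι → α) (N : ℕ) :
    Set (Matrix.SpecialLinearGroup ι R) :=
  (List.ofFn fun k : Fin N => (alternatingUnipotent R w k : Set _)).prod

lemma one_mem_alternatingProducts (w : ι → α) (N : ℕ) : 1 ∈ alternatingProducts R w N :=
  Set.mem_prod_list_ofFn.2 ⟨fun _ => 1, by simp [List.ofFn_const]⟩

lemma transvection_mem_normalizer_alternatingUnipotent {w : ι → α} {i j : ι} (hij : i ≠ j)
    (hw : w i = w j) (r : R) (k : ℕ) :
    Matrix.SpecialLinearGroup.transvection hij r ∈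
      Subgroup.normalizer (alternatingUnipotent R w k : Set (Matrix.SpecialLinearGroup ι R)) := by
  rw [alternatingUnipotent]
  split_ifs
  · exact mem_normalizer_unipotentRadical (blockTriangular_transvection hw.le r)
  · exact mem_normalizer_unipotentRadical (blockTriangular_transvection' hw.ge r)

end AlternatingProducts

section ElementarySubgroup

variable {n N : ℕ} {R : Type} [CommRing R]

lemma mem_unipotentRadical_id_iff {g : SL(n, R)} :
    g ∈ unipotentRadical R (id : Fin n → Fin n) ↔ g ∈ UnitriangularUpper n R :=
  mem_unipotentRadical_iff_of_injective Function.injective_id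

lemma mem_unipotentRadical_toDual_iff {g : SL(n, R)} :
    g ∈ unipotentRadical R (toDual ∘ (id : Fin n → Fin n)) ↔ g ∈ UnitriangularLower n R :=
  mem_unipotentRadical_iff_of_injective toDual.injective

lemma isAlternatingUnitriangularProd_iff {g : SL(n, R)} :
    IsAlternatingUnitriangularProd n R N g ↔
      g ∈ alternatingProducts R (id : Fin n → Fin n) N := by
  have hmem (k : ℕ) (u : SL(n, R)) :
      ((k % 2 = 0 → u ∈ UnitriangularUpper n R) ∧ (k % 2 = 1 → u ∈ UnitriangularLower n R)) ↔
        u ∈ alternatingUnipotent R (id : Fin n → Fin n) k := by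
    rw [alternatingUnipotent, ← Nat.even_iff, ← Nat.odd_iff, ← Nat.not_even_iff_odd]
    split_ifs with hk
    · simp [hk, mem_unipotentRadical_id_iff]
    · simp [hk, ← mem_unipotentRadical_toDual_iff]
  simp only [IsAlternatingUnitriangularProd, hmem, alternatingProducts, Set.mem_prod_list_ofFn]
  constructor
  · rintro ⟨u, hu, rfl⟩
    exact ⟨fun k => ⟨u k, hu k⟩, rfl⟩
  · rintro ⟨u, rfl⟩
    exact ⟨fun k => u k, fun k => (u k).2, rfl⟩

lemma elementarySubgroup_le_iff {H : Subgroup SL(n, R)} :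
    ElementarySubgroup n R ≤ H ↔
      ∀ (i j : Fin n) (hij : i ≠ j) (r : R), Matrix.SpecialLinearGroup.transvection hij r ∈ H := by
  refine (Subgroup.closure_le _).trans ⟨fun h i j hij r => h ⟨i, j, r, hij, rfl⟩, ?_⟩
  rintro h g ⟨i, j, r, hij, hg⟩
  exact (Subtype.ext hg : g = Matrix.SpecialLinearGroup.transvection hij r) ▸ h i j hij r

lemma transvection_mem_elementarySubgroup {i j : Fin n} (hij : i ≠ j) (r : R) :
    Matrix.SpecialLinearGroup.transvection hij r ∈ ElementarySubgroup n R :=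
  elementarySubgroup_le_iff.1 le_rfl i j hij r

lemma elementarySubgroup_succ_le {H : Subgroup SL(n + 1, R)}
    (hup : ∀ (i : Fin n) (r : R),
      Matrix.SpecialLinearGroup.transvection i.castSucc_lt_succ.ne r ∈ H)
    (hdown : ∀ (i : Fin n) (r : R),
      Matrix.SpecialLinearGroup.transvection i.castSucc_lt_succ.ne' r ∈ H) :
    ElementarySubgroup (n + 1) R ≤ H := by
  have hcomm {i j k : Fin (n + 1)} (hij : i ≠ j) (hjk : j ≠ k) (hik : i ≠ k) (r : R)
      (hl : ∀ r, Matrix.SpecialLinearGroup.transvection hij r ∈ H)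
      (hr : ∀ r, Matrix.SpecialLinearGroup.transvection hjk r ∈ H) :
      Matrix.SpecialLinearGroup.transvection hik r ∈ H := by
    rw [← mul_one r, ← transvection_commutator hij hjk hik]
    exact Subgroup.commutator_le_self H (Subgroup.commutator_mem_commutator (hl r) (hr 1))
  have hlt (i j : Fin (n + 1)) : ∀ hij : i < j, ∀ r : R,
      Matrix.SpecialLinearGroup.transvection hij.ne r ∈ H ∧
        Matrix.SpecialLinearGroup.transvection hij.ne' r ∈ H := by
    induction j using Fin.induction with
    | zero => exact fun hij => absurd hij i.not_lt_zero
    | succ j ih =>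
      intro hij r
      rcases (Fin.le_castSucc_iff.2 hij).eq_or_lt with rfl | hij'
      · exact ⟨hup j r, hdown j r⟩
      · exact ⟨hcomm hij'.ne j.castSucc_lt_succ.ne hij.ne r (fun r => (ih hij' r).1) (hup j),
          hcomm j.castSucc_lt_succ.ne' hij'.ne' hij.ne' r (hdown j) fun r => (ih hij' r).2⟩
  refine elementarySubgroup_le_iff.2 fun i j hij r => ?_
  rcases hij.lt_or_gt with h | h
  · exact (hlt i j h r).1
  · exact (hlt j i h r).2

lemma map_blockEmbedding_elementarySubgroup_le_normalizer {ι α : Type*} [Fintype ι] [DecidableEq ι]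
    [LinearOrder α] (s : Fin n ↪ ι) {w : ι → α} (hw : ∀ p q, w (s p) = w (s q)) (k : ℕ) :
    (ElementarySubgroup n R).map (blockEmbedding R s) ≤
      Subgroup.normalizer (alternatingUnipotent R w k : Set (Matrix.SpecialLinearGroup ι R)) := by
  refine Subgroup.map_le_iff_le_comap.2 (elementarySubgroup_le_iff.2 fun p q hpq r => ?_)
  rw [Subgroup.mem_comap, blockEmbedding_transvection]
  exact transvection_mem_normalizer_alternatingUnipotent _ (hw p q) r k

lemma alternatingUnipotent_fin_two_le_elementarySubgroup (k : ℕ) :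
    alternatingUnipotent R (id : Fin 2 → Fin 2) k ≤ ElementarySubgroup 2 R := by
  have hrange {i j : Fin 2} (hij : i ≠ j) :
      Set.range (Matrix.SpecialLinearGroup.transvection hij) ⊆
        (ElementarySubgroup 2 R : Set SL(2, R)) :=
    Set.range_subset_iff.2 (transvection_mem_elementarySubgroup hij)
  rw [alternatingUnipotent, ← SetLike.coe_subset_coe]
  split_ifs
  · rw [unipotentRadical_eq_range_transvection zero_ne_one (by decide)]
    exact hrange _
  · rw [unipotentRadical_eq_range_transvection one_ne_zero (by decide)]
    exact hrange _

end ElementarySubgroup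

section RankReduction

variable {n N : ℕ} {R : Type} [CommRing R]

/-- The pair of consecutive indices `i`, `i + 1`, along which `SL(2,R)` is embedded as the `A₁` Levi
factor of a standard parabolic subgroup. -/
def adjacentPair (i : Fin n) : Fin 2 ↪ Fin (n + 1) where
  toFun := ![i.castSucc, i.succ]
  inj' := by
    intro p q
    fin_cases p <;> fin_cases q <;> simp [i.castSucc_lt_succ.ne, i.castSucc_lt_succ.ne']

/-- The map `i.predAbove` merges `i` and `i + 1`: as a weight it defines the parabolic subgroup
whose Levi factor contains the copy of `SL(2,R)` on `adjacentPair i`. -/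
lemma lt_iff_predAbove_lt_or (i : Fin n) (a b : Fin (n + 1)) :
    a < b ↔ i.predAbove a < i.predAbove b ∨ a = i.castSucc ∧ b = i.succ := by
  have hval (c : Fin (n + 1)) : (i.predAbove c : ℕ) = if (i : ℕ) < c then (c : ℕ) - 1 else c := by
    simp only [Fin.predAbove, Fin.lt_def, Fin.val_castSucc]
    split_ifs <;> simp
  simp only [Fin.lt_def, Fin.ext_iff, hval, Fin.val_castSucc, Fin.val_succ]
  split_ifs <;> omega

lemma predAbove_adjacentPair (i : Fin n) (p : Fin 2) : i.predAbove (adjacentPair i p) = i := by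
  fin_cases p
  · exact Fin.predAbove_castSucc_self i
  · exact Fin.predAbove_succ_self i

lemma alternatingUnipotent_id_eq_mul (i : Fin n) (k : ℕ) :
    (alternatingUnipotent R (id : Fin (n + 1) → Fin (n + 1)) k : Set SL(n + 1, R)) =
      blockEmbedding R (adjacentPair i) ''
          (alternatingUnipotent R (id : Fin 2 → Fin 2) k : Set SL(2, R)) *
        (alternatingUnipotent R i.predAbove k : Set SL(n + 1, R)) := by
  simp only [alternatingUnipotent]
  split_ifs
  · exact unipotentRadical_eq_image_blockEmbedding_mul _ zero_ne_one (by decide)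
      (lt_iff_predAbove_lt_or i)
  · exact unipotentRadical_eq_image_blockEmbedding_mul _ one_ne_zero (by decide)
      fun a b => (lt_iff_predAbove_lt_or i b a).trans (or_congr_right and_comm)

lemma alternatingProducts_id_eq_mul (i : Fin n)
    (hE : alternatingProducts R (id : Fin 2 → Fin 2) N = ElementarySubgroup 2 R) :
    alternatingProducts R (id : Fin (n + 1) → Fin (n + 1)) N =
      ((ElementarySubgroup 2 R).map (blockEmbedding R (adjacentPair i)) : Set SL(n + 1, R)) *
        alternatingProducts R i.predAbove N := by
  have hnorm (k : ℕ) := map_blockEmbedding_elementarySubgroup_le_normalizer (R := R)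
    (adjacentPair i) (w := i.predAbove) (by simp [predAbove_adjacentPair]) k
  have himage (k : ℕ) := Set.image_mono (f := blockEmbedding R (adjacentPair i))
    (alternatingUnipotent_fin_two_le_elementarySubgroup (R := R) k)
  rw [alternatingProducts]
  simp only [alternatingUnipotent_id_eq_mul i]
  rw [prod_ofFn_mul_of_le_normalizer _ (fun k => himage k) fun k => hnorm k, Subgroup.coe_map,
    ← hE, alternatingProducts, Set.image_list_prod, List.map_ofFn]
  rfl

lemma map_blockEmbedding_le_stabilizer_alternatingProducts (i : Fin n)
    (hE : alternatingProducts R (id : Fin 2 → Fin 2) N = ElementarySubgroup 2 R) :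
    (ElementarySubgroup 2 R).map (blockEmbedding R (adjacentPair i)) ≤
      MulAction.stabilizer SL(n + 1, R)
        (alternatingProducts R (id : Fin (n + 1) → Fin (n + 1)) N) := by
  intro g hg
  rw [MulAction.mem_stabilizer_iff, alternatingProducts_id_eq_mul i hE, ← smul_mul_assoc,
    smul_coe_set hg]

lemma elementarySubgroup_succ_le_of_map_adjacentPair_le {H : Subgroup SL(n + 1, R)}
    (hH : ∀ i : Fin n, (ElementarySubgroup 2 R).map (blockEmbedding R (adjacentPair i)) ≤ H) :
    ElementarySubgroup (n + 1) R ≤ H := by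
  have hmem (i : Fin n) {p q : Fin 2} (hpq : p ≠ q) (r : R) :
      Matrix.SpecialLinearGroup.transvection ((adjacentPair i).injective.ne hpq) r ∈ H :=
    hH i ⟨_, transvection_mem_elementarySubgroup hpq r, blockEmbedding_transvection _ hpq r⟩
  exact elementarySubgroup_succ_le (fun i => hmem i zero_ne_one) fun i => hmem i one_ne_zero

end RankReduction

theorem statement3 (R : Type) [CommRing R] (n : ℕ) (hn : 2 ≤ n) (N : ℕ) (hN : 1 ≤ N)
    (h2 : ∀ g ∈ ElementarySubgroup 2 R, IsAlternatingUnitriangularProd 2 R N g) :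
    ∀ g ∈ ElementarySubgroup n R, IsAlternatingUnitriangularProd n R N g := by
  obtain ⟨n, rfl⟩ : ∃ m, n = m + 1 := ⟨n - 1, by omega⟩
  have hE : alternatingProducts R (id : Fin 2 → Fin 2) N = ElementarySubgroup 2 R :=
    Set.Subset.antisymm
      (prod_ofFn_subset _ fun k => alternatingUnipotent_fin_two_le_elementarySubgroup k)
      fun g hg => isAlternatingUnitriangularProd_iff.1 (h2 g hg)
  intro g hg
  have hstab : g • alternatingProducts R (id : Fin (n + 1) → Fin (n + 1)) N =
      alternatingProducts R id N :=
    elementarySubgroup_succ_le_of_map_adjacentPair_le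
      (fun i => map_blockEmbedding_le_stabilizer_alternatingProducts i hE) hg
  rw [isAlternatingUnitriangularProd_iff, ← hstab]
  exact ⟨1, one_mem_alternatingProducts _ N, mul_one g⟩
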